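/- There exists an absolute constant c > 0 (c = 10⁻⁵ suffices) such that the following holds. Let p : ℕ → [0,1] be a function satisfying n·p(n) − log n − log log n → ∞ and n·p(n) − log n − log log n = o(log log n) as n → ∞. Then with high probability the random graph G ~ G(n, p(n)) satisfies: for every vertex set W ⊆ V(G) with |W| ≥ 0.1·n and every graph H on vertex set W which is a subgraph of G, is a (|W|/4, 2)-expander, has at most c·n·log n edges, and contains no Hamilton cycle, some booster of H is an edge of G. -/

import Mathlib

open scoped Classical in
/-- The probability, under the binomial random graph `G(n,p)`, that a graph
property `P` holds. Each of the `n.choose 2` possible edges is present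
independently with probability `p`. -/
noncomputable def gnpProb (n : ℕ) (p : ℝ) (P : SimpleGraph (Fin n) → Prop) : ℝ :=
  ∑ G : SimpleGraph (Fin n),
    (if P G then p ^ G.edgeSet.ncard * (1 - p) ^ (n.choose 2 - G.edgeSet.ncard) else 0)

/-- The external neighbourhood of a vertex set `U`: vertices outside `U` having a
neighbour in `U`. -/
def extNbhd {V : Type*} (G : SimpleGraph V) (U : Set V) : Set V :=
  {u | u ∉ U ∧ ∃ v ∈ U, G.Adj u v}

/-- A graph is a `(k,α)`-expander if `|N(U)| ≥ α|U|` for every vertex set `U` with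
`|U| ≤ k`. -/
def IsExpander {V : Type*} (G : SimpleGraph V) (k α : ℝ) : Prop :=
  ∀ U : Set V, (U.ncard : ℝ) ≤ k → α * (U.ncard : ℝ) ≤ ((extNbhd G U).ncard : ℝ)

/-- A non-edge `e` of `G` is a booster if adding it creates a graph which is either
Hamiltonian or whose longest path is longer than that of `G`. -/
def IsBooster {V : Type*} [DecidableEq V] (G : SimpleGraph V) (e : Sym2 V) : Prop :=
  ¬e.IsDiag ∧ e ∉ G.edgeSet ∧
    ((∃ (a : V) (w : (G ⊔ SimpleGraph.fromEdgeSet {e}).Walk a a), w.IsHamiltonianCycle) ∨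
      ∃ (u v : V) (w : (G ⊔ SimpleGraph.fromEdgeSet {e}).Walk u v), w.IsPath ∧
        ∀ (a b : V) (w' : G.Walk a b), w'.IsPath → w'.length < w.length)

/-!
Pósa's rotation–extension argument: rotating a longest path of a `(k, 2)`-expander yields more
than `k` possible first vertices for a fixed last vertex. In a connected non-Hamiltonian graph the
two ends of a longest path form a booster, so an expander on `m` vertices with `k = m / 4` has at
least `m² / 32` boosters.

If `G` fails, there are a vertex set `W` and a sparse `F ≤ G` on `W` all of whose boosters are
missing from `G`. For fixed `W` and `F` with `b` boosters this has probability
`p ^ e(F) * (1 - p) ^ b ≤ p ^ e(F) * exp (-p b)`, as the edges of `F` and the boosters are distinct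
pairs. Weighting each `F` with at most `M` edges by `exp (t (M - e(F))) ≥ 1` bounds the sum of
`p ^ e(F)` over sparse `F` by `exp (t M + p exp (-t) n² / 2)`. With `b` of order `n²` and `n p` at
least of order `log n`, a large constant `t` and then a small `M / (n log n)` leave
`exp (-Ω(n log n))`, which beats the `2 ^ n` choices of `W`.
-/

section ConsecutivePairs

variable {V : Type*} {a b c : V} {l : List V}

theorem pair_infix_cons_iff :
    [a, b] <:+: c :: l ↔ (a = c ∧ l.head? = some b) ∨ [a, b] <:+: l := by
  cases l <;> simp [List.infix_cons_iff, eq_comm (a := b)]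

theorem pair_infix_append_iff {l₁ l₂ : List V} :
    [a, b] <:+: l₁ ++ l₂ ↔
      [a, b] <:+: l₁ ∨ [a, b] <:+: l₂ ∨ (l₁.getLast? = some a ∧ l₂.head? = some b) := by
  induction l₁ with
  | nil => simp
  | cons c t ih =>
    cases t with
    | nil => simp [pair_infix_cons_iff, eq_comm (a := a), or_comm]
    | cons d t =>
      rw [List.cons_append, pair_infix_cons_iff, ih, pair_infix_cons_iff (l := d :: t)]
      simp only [List.cons_append, List.head?_cons, List.getLast?_cons_cons, or_assoc]

theorem pair_infix_reverse_iff : [a, b] <:+: l.reverse ↔ [b, a] <:+: l :=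
  List.reverse_infix (l₁ := [b, a])

theorem pair_infix_right_unique {b' : V} (hl : l.Nodup) (h : [a, b] <:+: l)
    (h' : [a, b'] <:+: l) : b = b' := by
  induction l with
  | nil => simp at h
  | cons c t ih =>
    obtain ⟨hc, ht⟩ := List.nodup_cons.1 hl
    rcases pair_infix_cons_iff.1 h with ⟨hac, hb⟩ | hb <;>
      rcases pair_infix_cons_iff.1 h' with ⟨hac', hb'⟩ | hb'
    · exact Option.some.inj (hb.symm.trans hb')
    · exact absurd (hb'.mem List.mem_cons_self) (hac ▸ hc)
    · exact absurd (hb.mem List.mem_cons_self) (hac' ▸ hc)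
    · exact ih ht hb hb'

theorem pair_infix_left_unique {a' : V} (hl : l.Nodup) (h : [a, b] <:+: l)
    (h' : [a', b] <:+: l) : a = a' :=
  pair_infix_right_unique (List.nodup_reverse.2 hl) (pair_infix_reverse_iff.2 h)
    (pair_infix_reverse_iff.2 h')

theorem ne_of_pair_infix_cons (hl : (c :: l).Nodup) (h : [a, b] <:+: c :: l) : b ≠ c := by
  rintro rfl
  have hb : b ∉ l := (List.nodup_cons.1 hl).1
  rcases pair_infix_cons_iff.1 h with ⟨-, h⟩ | h
  · exact hb (List.mem_of_head? h)
  · exact hb (h.mem (by simp))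

theorem exists_head?_reverse_append (v w : V) (B A : List V) :
    ∃ z, ((v :: B).reverse ++ w :: A).head? = some z ∧ [z, w] <:+: v :: B ++ w :: A := by
  obtain ⟨z, hz⟩ : ∃ z, (v :: B).getLast? = some z :=
    ⟨_, List.getLast?_eq_some_getLast (List.cons_ne_nil v B)⟩
  refine ⟨z, ?_, pair_infix_append_iff.2 (.inr (.inr ⟨hz, rfl⟩))⟩
  rw [List.head?_append, List.head?_reverse, hz, Option.some_or]

/-- The vertices that occur in the list `l` next to an element of `S`. -/
def listNbhd (l : List V) (S : Set V) : Set V :=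
  {w | ∃ r ∈ S, [w, r] <:+: l ∨ [r, w] <:+: l}

theorem ncard_le_of_rel_injective {α β : Type*} {S : Set α} {T : Set β} {r : α → β → Prop}
    (hT : T.Finite) (hex : ∀ a ∈ S, ∃ b ∈ T, r a b) (hinj : ∀ a a' b, r a b → r a' b → a = a') :
    S.ncard ≤ T.ncard := by
  obtain rfl | ⟨a₀, ha₀⟩ := S.eq_empty_or_nonempty
  · simp
  have : Nonempty β := ⟨(hex a₀ ha₀).choose⟩
  choose! f hf using hex
  refine Set.ncard_le_ncard_of_injOn f (fun a ha => (hf a ha).1) (fun a ha a' ha' h => ?_) hT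
  exact hinj a a' (f a) (hf a ha).2 (h ▸ (hf a' ha').2)

theorem ncard_listNbhd_add_one_le {S : Set V} (hS : S.Finite) (hl : (c :: l).Nodup)
    (hc : c ∈ S) : (listNbhd (c :: l) S).ncard + 1 ≤ 2 * S.ncard := by
  have succ_le : {w | ∃ r ∈ S, [r, w] <:+: c :: l}.ncard ≤ S.ncard :=
    ncard_le_of_rel_injective hS (fun _ h => h) fun _ _ _ => pair_infix_right_unique hl
  -- The head of the list has no predecessor, which saves one.
  have pred_le : {w | ∃ r ∈ S, [w, r] <:+: c :: l}.ncard ≤ (S \ {c}).ncard :=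
    ncard_le_of_rel_injective hS.sdiff
      (fun _ ⟨r, hr, h⟩ => ⟨r, ⟨hr, ne_of_pair_infix_cons hl h⟩, h⟩)
      fun _ _ _ => pair_infix_left_unique hl
  have union : listNbhd (c :: l) S =
      {w | ∃ r ∈ S, [w, r] <:+: c :: l} ∪ {w | ∃ r ∈ S, [r, w] <:+: c :: l} := by
    ext w
    simp only [listNbhd, Set.mem_union, Set.mem_ofPred_eq, and_or_left, exists_or]
  have := Set.ncard_sdiff_singleton_add_one hc hS
  have := Set.ncard_union_le {w | ∃ r ∈ S, [w, r] <:+: c :: l} {w | ∃ r ∈ S, [r, w] <:+: c :: l}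
  rw [union]
  omega

end ConsecutivePairs

section Rotations

variable {V : Type*} {G : SimpleGraph V} {l l' : List V} {S : Set V}

/-- A Pósa rotation of a path, given as a list of vertices: the path `v … z w …` becomes
`z … v w …` by means of the edge `vw`. The last vertex stays fixed. -/
inductive IsRotation (G : SimpleGraph V) : List V → List V → Prop
  | intro {v w : V} (B A : List V) (hvw : G.Adj v w) :
      IsRotation G (v :: B ++ w :: A) ((v :: B).reverse ++ w :: A)

/-- The first vertices of all the lists that arise from `l` by a sequence of rotations. -/
def rotationEnds (G : SimpleGraph V) (l : List V) : Set V :=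
  {v | ∃ l', Relation.ReflTransGen (IsRotation G) l l' ∧ l'.head? = some v}

/-- `l` lists the vertices of a longest path of `G`. -/
structure IsLongestPath (G : SimpleGraph V) (l : List V) : Prop where
  isChain : l.IsChain G.Adj
  nodup : l.Nodup
  length_le : ∀ l' : List V, l'.IsChain G.Adj → l'.Nodup → l'.length ≤ l.length

theorem isChain_adj_reverse (hl : l.IsChain G.Adj) : l.reverse.IsChain G.Adj :=
  List.isChain_reverse.2 (hl.imp fun _ _ h => h.symm)

namespace IsRotation

theorem perm (h : IsRotation G l l') : l'.Perm l := by
  obtain ⟨B, A, -⟩ := h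
  exact (List.reverse_perm _).append_right _

theorem getLast?_eq (h : IsRotation G l l') : l'.getLast? = l.getLast? := by
  obtain ⟨B, A, -⟩ := h
  simp only [List.getLast?_append_of_ne_nil _ (List.cons_ne_nil _ A)]

theorem isChain (h : IsRotation G l l') (hl : l.IsChain G.Adj) : l'.IsChain G.Adj := by
  obtain ⟨B, A, hvw⟩ := h
  obtain ⟨hB, hA, -⟩ := List.isChain_append.1 hl
  refine List.isChain_append.2 ⟨isChain_adj_reverse hB, hA, ?_⟩
  simpa using hvw

theorem isLongestPath (h : IsRotation G l l') (hl : IsLongestPath G l) : IsLongestPath G l' where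
  isChain := h.isChain hl.isChain
  nodup := h.perm.nodup_iff.2 hl.nodup
  length_le m hm hm' := h.perm.length_eq ▸ hl.length_le m hm hm'

/- The only consecutive pair that a rotation creates is `v w`. Since `v` is in `S`, only `w` could
be a new neighbour of `S`; but before the rotation `w` was next to `z`, which is also in `S`. -/
theorem listNbhd_sdiff_subset (h : IsRotation G l l') (hl : ∀ v ∈ l.head?, v ∈ S)
    (hl' : ∀ z ∈ l'.head?, z ∈ S) : listNbhd l' S \ S ⊆ listNbhd l S := by
  obtain @⟨v, w, B, A, hvw⟩ := h
  have hv : v ∈ S := hl v rfl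
  obtain ⟨z, hz, hzw⟩ := exists_head?_reverse_append v w B A
  have hw : w ∈ listNbhd (v :: B ++ w :: A) S := ⟨z, hl' z hz, .inr hzw⟩
  have last : (v :: B).reverse.getLast? = some v := by simp
  rintro a ⟨⟨r, hr, h⟩, ha⟩
  rw [pair_infix_append_iff, pair_infix_append_iff, pair_infix_reverse_iff,
    pair_infix_reverse_iff, last, List.head?_cons] at h
  rcases h with (h | h | h) | (h | h | h)
  · exact ⟨r, hr, .inr (pair_infix_append_iff.2 (.inl h))⟩
  · exact ⟨r, hr, .inl (pair_infix_append_iff.2 (.inr (.inl h)))⟩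
  · exact absurd (Option.some.inj h.1 ▸ hv) ha
  · exact ⟨r, hr, .inl (pair_infix_append_iff.2 (.inl h))⟩
  · exact ⟨r, hr, .inr (pair_infix_append_iff.2 (.inr (.inl h)))⟩
  · exact Option.some.inj h.2 ▸ hw

end IsRotation

theorem getLast?_eq_of_rotations (h : Relation.ReflTransGen (IsRotation G) l l') :
    l'.getLast? = l.getLast? := by
  induction h with
  | refl => rfl
  | tail _ hrot ih => exact hrot.getLast?_eq.trans ih

theorem listNbhd_rotationEnds_sdiff_subset (h : Relation.ReflTransGen (IsRotation G) l l') :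
    listNbhd l' (rotationEnds G l) \ rotationEnds G l ⊆ listNbhd l (rotationEnds G l) := by
  induction h with
  | refl => exact Set.sdiff_subset
  | tail hreach hrot ih =>
    refine fun w hw => ih ⟨hrot.listNbhd_sdiff_subset ?_ ?_ hw, hw.2⟩
    · exact fun v hv => ⟨_, hreach, hv⟩
    · exact fun z hz => ⟨_, hreach.tail hrot, hz⟩

namespace IsLongestPath

theorem of_rotations (hl : IsLongestPath G l) (h : Relation.ReflTransGen (IsRotation G) l l') :
    IsLongestPath G l' := by
  induction h with
  | refl => exact hl
  | tail _ hrot ih => exact hrot.isLongestPath ih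

theorem reverse (hl : IsLongestPath G l) : IsLongestPath G l.reverse where
  isChain := isChain_adj_reverse hl.isChain
  nodup := List.nodup_reverse.2 hl.nodup
  length_le m hm hm' := (hl.length_le m hm hm').trans_eq List.length_reverse.symm

theorem mem_of_adj_head {v w : V} (hl : IsLongestPath G l) (hv : l.head? = some v)
    (hwv : G.Adj w v) : w ∈ l := by
  by_contra hw
  have hchain : (w :: l).IsChain G.Adj := by
    refine List.isChain_cons.2 ⟨fun y hy => ?_, hl.isChain⟩
    exact Option.some.inj (hv.symm.trans hy) ▸ hwv
  have := hl.length_le _ hchain (List.nodup_cons.2 ⟨hw, hl.nodup⟩)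
  simp at this

theorem ne_nil [Nonempty V] (hl : IsLongestPath G l) : l ≠ [] := by
  rintro rfl
  simpa using hl.length_le [Classical.arbitrary V] (by simp) (by simp)

theorem extNbhd_rotationEnds_subset (hl : IsLongestPath G l) :
    extNbhd G (rotationEnds G l) ⊆ listNbhd l (rotationEnds G l) := by
  rintro w ⟨hw, v, ⟨l', hl', hv⟩, hwv⟩
  have hwl' : w ∈ l' := (hl.of_rotations hl').mem_of_adj_head hv hwv
  obtain ⟨_ | ⟨v', B⟩, A, rfl⟩ := List.append_of_mem hwl'
  · exact absurd (Option.some.inj hv) hwv.ne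
  obtain rfl : v' = v := Option.some.inj hv
  obtain ⟨z, hz, hzw⟩ := exists_head?_reverse_append v' w B A
  have hz_end : z ∈ rotationEnds G l := ⟨_, hl'.tail (.intro B A hwv.symm), hz⟩
  exact listNbhd_rotationEnds_sdiff_subset hl' ⟨⟨z, hz_end, .inr hzw⟩, hw⟩

theorem lt_ncard_rotationEnds [Finite V] [Nonempty V] {k : ℝ} (hl : IsLongestPath G l)
    (hG : IsExpander G k 2) : k < (rotationEnds G l).ncard := by
  obtain ⟨v, t, rfl⟩ := List.exists_cons_of_ne_nil hl.ne_nil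
  have hv : v ∈ rotationEnds G (v :: t) := ⟨_, .refl, rfl⟩
  have small_nbhd :
      (extNbhd G (rotationEnds G (v :: t))).ncard + 1 ≤ 2 * (rotationEnds G (v :: t)).ncard :=
    (Nat.succ_le_succ (Set.ncard_le_ncard hl.extNbhd_rotationEnds_subset (Set.toFinite _))).trans
      (ncard_listNbhd_add_one_le (Set.toFinite _) hl.nodup hv)
  by_contra! hk
  have large_nbhd := hG _ hk
  rify at small_nbhd
  linarith

end IsLongestPath

theorem exists_isLongestPath [Finite V] (G : SimpleGraph V) : ∃ l, IsLongestPath G l := by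
  have := Fintype.ofFinite V
  have hfin : {l : List V | l.IsChain G.Adj ∧ l.Nodup}.Finite :=
    (List.finite_length_le V (Fintype.card V)).subset fun l hl => hl.2.length_le_card
  obtain ⟨l, hl, hmax⟩ := hfin.exists_maximalFor List.length _ ⟨[], by simp⟩
  exact ⟨l, hl.1, hl.2, fun l' h₁ h₂ => not_lt.1 fun h => h.not_ge (hmax ⟨h₁, h₂⟩ h.le)⟩

end Rotations

section Expanders

variable {V : Type*} {G : SimpleGraph V} {k α : ℝ}

theorem extNbhd_subset_of_subset {U S : Set V} (hUS : U ⊆ S) (hS : extNbhd G S = ∅) :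
    extNbhd G U ⊆ S := by
  rintro x ⟨-, v, hv, hadj⟩
  by_contra hx
  exact hS.subset ⟨hx, v, hUS hv, hadj⟩

theorem extNbhd_supp_eq_empty (C : G.ConnectedComponent) : extNbhd G C.supp = ∅ :=
  Set.eq_empty_of_forall_notMem fun _ ⟨hx, _, hv, hadj⟩ =>
    hx (SimpleGraph.ConnectedComponent.mem_supp_of_adj_mem_supp C hv hadj.symm)

theorem extNbhd_nonempty_of_preconnected {S : Set V} (hG : G.Preconnected) (hS : S.Nonempty)
    (hS' : S ≠ Set.univ) : (extNbhd G S).Nonempty := by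
  obtain ⟨u, hu⟩ := hS
  obtain ⟨v, hv⟩ := (Set.ne_univ_iff_exists_notMem S).1 hS'
  obtain ⟨w⟩ := hG u v
  obtain ⟨d, -, hfst, hsnd⟩ := w.exists_boundary_dart S hu hv
  exact ⟨d.snd, hsnd, d.fst, hfst, d.adj.symm⟩

namespace IsExpander

theorem mul_floor_le_ncard_of_extNbhd_eq_empty [Finite V] {S : Set V} (hG : IsExpander G k α)
    (hα : 0 < α) (hS : S.Nonempty) (hS' : extNbhd G S = ∅) : (1 + α) * ⌊k⌋₊ ≤ S.ncard := by
  have S_pos : (0 : ℝ) < S.ncard := by exact_mod_cast (Set.ncard_pos (Set.toFinite S)).2 hS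
  have S_gt : k < S.ncard := by
    by_contra! hle
    have := hG S hle
    rw [hS', Set.ncard_empty, Nat.cast_zero] at this
    nlinarith
  obtain hk | hk := lt_or_ge k 0
  · simp [Nat.floor_of_nonpos hk.le]
  obtain ⟨U, hUS, hU⟩ := Set.exists_subset_card_eq (s := S) (n := ⌊k⌋₊)
    (by exact_mod_cast (Nat.floor_le hk).trans S_gt.le)
  have U_expands : α * ⌊k⌋₊ ≤ (extNbhd G U).ncard := hU ▸ hG U (hU ▸ Nat.floor_le hk)
  have disj : Disjoint U (extNbhd G U) := Set.disjoint_left.2 fun _ hx hx' => hx'.1 hx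
  have sum_le : U.ncard + (extNbhd G U).ncard ≤ S.ncard := by
    rw [← Set.ncard_union_eq disj (Set.toFinite _) (Set.toFinite _)]
    exact Set.ncard_le_ncard (Set.union_subset hUS (extNbhd_subset_of_subset hUS hS'))
      (Set.toFinite _)
  rw [hU] at sum_le
  rify at sum_le
  linarith

theorem preconnected [Finite V] (hG : IsExpander G k α) (hα : 0 < α)
    (hV : Nat.card V < 2 * (1 + α) * ⌊k⌋₊) : G.Preconnected := by
  intro u v
  by_contra hne
  have large (x : V) : (1 + α) * ⌊k⌋₊ ≤ (G.connectedComponentMk x).supp.ncard :=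
    hG.mul_floor_le_ncard_of_extNbhd_eq_empty hα (G.connectedComponentMk x).nonempty_supp
      (extNbhd_supp_eq_empty _)
  have disj : Disjoint (G.connectedComponentMk u).supp (G.connectedComponentMk v).supp :=
    SimpleGraph.pairwise_disjoint_supp_connectedComponent G
      (mt SimpleGraph.ConnectedComponent.exact hne)
  have sum_le : (G.connectedComponentMk u).supp.ncard + (G.connectedComponentMk v).supp.ncard ≤
      Nat.card V := by
    rw [← Set.ncard_union_eq disj (Set.toFinite _) (Set.toFinite _)]
    exact Set.ncard_le_card _
  rify at sum_le
  linarith [large u, large v]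

theorem three_le_length_of_isLongestPath [Finite V] [Nonempty V] {l : List V}
    (hG : IsExpander G k 2) (hk : 1 ≤ k) (hl : IsLongestPath G l) : 3 ≤ l.length := by
  let v : V := Classical.arbitrary V
  have two_nbrs : 1 < (extNbhd G {v}).ncard := by
    have := hG {v} (by simpa using hk)
    rw [Set.ncard_singleton, Nat.cast_one, mul_one] at this
    exact_mod_cast this
  obtain ⟨x, hx, y, hy, hxy⟩ := (Set.one_lt_ncard (Set.toFinite _)).1 two_nbrs
  obtain ⟨-, _, rfl, hadjx⟩ := hx
  obtain ⟨-, _, rfl, hadjy⟩ := hy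
  exact hl.length_le [x, v, y] (by simp [hadjx, hadjy.symm]) (by simp [hadjx.ne, hadjy.ne', hxy])

end IsExpander

end Expanders

section Boosters

variable {V : Type*} {G : SimpleGraph V} {l : List V} {a b : V}

theorem exists_isHamiltonianCycle_of_adj_getLast_head [DecidableEq V]
    (hl : l.IsChain G.Adj) (hl' : l.Nodup) (hlen : 3 ≤ l.length) (hall : ∀ v, v ∈ l)
    (hb : l.head? = some b) (ha : l.getLast? = some a) (hab : G.Adj a b) :
    ∃ (x : V) (w : G.Walk x x), w.IsHamiltonianCycle := by
  have hne : l ≠ [] := List.ne_nil_of_length_pos (by omega)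
  obtain rfl : l.head hne = b := by
    simpa only [List.head?_eq_some_head hne, Option.some.injEq] using hb
  obtain rfl : l.getLast hne = a := by
    simpa only [List.getLast?_eq_some_getLast hne, Option.some.injEq] using ha
  let w := SimpleGraph.Walk.ofSupport l hne hl
  have hw : w.IsPath := by
    simpa only [SimpleGraph.Walk.isPath_def, w, SimpleGraph.Walk.support_ofSupport] using hl'
  have hw_length : w.length + 1 = l.length := by
    rw [← SimpleGraph.Walk.length_support, SimpleGraph.Walk.support_ofSupport]
  let : Fintype V := .ofList l hall
  have hl_length : l.length = Fintype.card V := by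
    rw [← List.toFinset_card_of_nodup hl', ← Finset.card_univ]
    exact congrArg Finset.card (Finset.eq_univ_of_forall fun v => List.mem_toFinset.2 (hall v))
  refine ⟨_, .cons hab w, ?_⟩
  rw [SimpleGraph.Walk.isHamiltonianCycle_iff_isCycle_and_length_eq,
    SimpleGraph.Walk.cons_isCycle_iff, SimpleGraph.Walk.length_cons]
  refine ⟨⟨hw, fun hmem => ?_⟩, hw_length.trans hl_length⟩
  have := hw.length_eq_one_of_mem_edges (Sym2.eq_swap ▸ hmem)
  omega

theorem exists_longer_path_of_adj_getLast_head {x w : V} (hl : l.IsChain G.Adj) (hl' : l.Nodup)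
    (hb : l.head? = some b) (ha : l.getLast? = some a) (hab : G.Adj a b) (hx : x ∈ l)
    (hw : w ∉ l) (hwx : G.Adj w x) :
    ∃ l' : List V, l'.IsChain G.Adj ∧ l'.Nodup ∧ l.length < l'.length := by
  obtain ⟨A, B, rfl⟩ := List.append_of_mem hx
  obtain ⟨hA, hB, -⟩ := List.isChain_append.1 hl
  have rotated_perm : ((x :: B) ++ A).Perm (A ++ x :: B) := List.perm_append_comm
  have rotated_chain : ((x :: B) ++ A).IsChain G.Adj := by
    refine List.isChain_append.2 ⟨hB, hA, fun y hy z hz => ?_⟩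
    rw [List.getLast?_append_of_ne_nil _ (List.cons_ne_nil _ _)] at ha
    rw [List.head?_append, Option.mem_def.1 hz, Option.some_or] at hb
    obtain rfl : y = a := Option.some.inj ((Option.mem_def.1 hy).symm.trans ha)
    obtain rfl : z = b := Option.some.inj hb
    exact hab
  refine ⟨w :: (x :: B ++ A), List.isChain_cons.2 ⟨?_, rotated_chain⟩,
    List.nodup_cons.2 ⟨fun h => hw (rotated_perm.mem_iff.1 h), rotated_perm.nodup_iff.2 hl'⟩, ?_⟩
  · rintro _ ⟨⟩
    exact hwx
  · rw [List.length_cons, rotated_perm.length_eq]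
    exact Nat.lt_succ_self _

theorem exists_isHamiltonianCycle_or_longer_path [DecidableEq V] (hG : G.Preconnected)
    (hl : l.IsChain G.Adj) (hl' : l.Nodup) (hlen : 3 ≤ l.length)
    (hb : l.head? = some b) (ha : l.getLast? = some a) (hab : G.Adj a b) :
    (∃ (x : V) (w : G.Walk x x), w.IsHamiltonianCycle) ∨
      ∃ l' : List V, l'.IsChain G.Adj ∧ l'.Nodup ∧ l.length < l'.length := by
  by_cases hall : ∀ v, v ∈ l
  · exact .inl (exists_isHamiltonianCycle_of_adj_getLast_head hl hl' hlen hall hb ha hab)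
  · obtain ⟨w, hw, x, hx, hwx⟩ := extNbhd_nonempty_of_preconnected (S := {v | v ∈ l}) hG
      ⟨b, List.mem_of_head? hb⟩ (by simpa [Set.eq_univ_iff_forall] using hall)
    exact .inr (exists_longer_path_of_adj_getLast_head hl hl' hb ha hab hx hw hwx)

theorem IsLongestPath.isBooster [DecidableEq V] (hl : IsLongestPath G l)
    (hG : G.Preconnected) (hH : ¬∃ (x : V) (w : G.Walk x x), w.IsHamiltonianCycle)
    (hlen : 3 ≤ l.length) (hb : l.head? = some b) (ha : l.getLast? = some a) :
    IsBooster G s(a, b) := by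
  have hne : a ≠ b := by
    rintro rfl
    obtain _ | ⟨x, _ | ⟨y, t⟩⟩ := l
    · simp at hlen
    · simp at hlen
    · rw [List.getLast?_cons_cons] at ha
      exact (List.nodup_cons.1 hl.nodup).1 (Option.some.inj hb ▸ List.mem_of_getLast? ha)
  have hnadj : ¬G.Adj a b := fun hab => by
    rcases exists_isHamiltonianCycle_or_longer_path hG hl.isChain hl.nodup hlen hb ha hab with
      h | ⟨l', h₁, h₂, hlt⟩
    · exact hH h
    · exact (hl.length_le l' h₁ h₂).not_gt hlt
  refine ⟨hne, hnadj, ?_⟩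
  have hle : G ≤ G ⊔ SimpleGraph.fromEdgeSet {s(a, b)} := le_sup_left
  refine (exists_isHamiltonianCycle_or_longer_path (hG.mono hle)
    (hl.isChain.imp fun _ _ h => hle h) hl.nodup hlen hb ha (by simp [hne])).imp_right ?_
  rintro ⟨l', h₁, h₂, hlt⟩
  refine ⟨_, _, .ofSupport l' (List.ne_nil_of_length_pos (by omega)) h₁, ?_, fun u v w hw => ?_⟩
  · rwa [SimpleGraph.Walk.isPath_def, SimpleGraph.Walk.support_ofSupport]
  · have := hl.length_le w.support w.isChain_adj_support hw.support_nodup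
    rw [SimpleGraph.Walk.length_support] at this
    rw [SimpleGraph.Walk.length_ofSupport]
    omega

/-- The graph whose edges are the boosters of `G`. -/
def boosterGraph [DecidableEq V] (G : SimpleGraph V) : SimpleGraph V :=
  .fromEdgeSet {e | IsBooster G e}

theorem edgeSet_boosterGraph [DecidableEq V] :
    (boosterGraph G).edgeSet = {e | IsBooster G e} := by
  rw [boosterGraph, SimpleGraph.edgeSet_fromEdgeSet]
  exact sdiff_eq_left.2 (Set.disjoint_left.2 fun e he => he.1)

theorem ncard_mul_le_two_mul_ncard_edgeSet [Finite V] {S : Set V} {d : ℝ}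
    (hS : ∀ v ∈ S, d ≤ (G.neighborSet v).ncard) : S.ncard * d ≤ 2 * G.edgeSet.ncard := by
  classical
  have := Fintype.ofFinite V
  have degree_eq (v : V) : (G.neighborSet v).ncard = G.degree v :=
    Set.ncard_eq_toFinset_card' (G.neighborSet v)
  calc S.ncard * d = ∑ _v ∈ S.toFinset, d := by
        rw [Finset.sum_const, nsmul_eq_mul, Set.ncard_eq_toFinset_card']
    _ ≤ ∑ v ∈ S.toFinset, (G.degree v : ℝ) :=
        Finset.sum_le_sum fun v hv => degree_eq v ▸ hS v (Set.mem_toFinset.1 hv)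
    _ ≤ ∑ v, (G.degree v : ℝ) :=
        Finset.sum_le_univ_sum_of_nonneg fun v => Nat.cast_nonneg _
    _ = 2 * G.edgeSet.ncard := by
        rw [← Nat.cast_sum, G.sum_degrees_eq_twice_card_edges, ← G.coe_edgeFinset,
          Set.ncard_coe_finset, Nat.cast_mul, Nat.cast_ofNat]

/- Each end of a rotated longest path can serve as the fixed end of further rotations, after
reversing the path; so each of more than `k` vertices lies in more than `k` boosters. -/
theorem IsExpander.sq_div_two_le_ncard_boosterGraph [Finite V] [Nonempty V] [DecidableEq V] {k : ℝ}
    (hG : IsExpander G k 2) (hk : 1 ≤ k) (hconn : G.Preconnected)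
    (hH : ¬∃ (x : V) (w : G.Walk x x), w.IsHamiltonianCycle) :
    k ^ 2 / 2 ≤ (boosterGraph G).edgeSet.ncard := by
  obtain ⟨l, hl⟩ := exists_isLongestPath G
  have many_nbrs : ∀ a ∈ rotationEnds G l, k ≤ ((boosterGraph G).neighborSet a).ncard := by
    rintro a ⟨l₁, hl₁, ha⟩
    have hrev : IsLongestPath G l₁.reverse := (hl.of_rotations hl₁).reverse
    have subset_nbrs : rotationEnds G l₁.reverse ⊆ (boosterGraph G).neighborSet a := by
      rintro b ⟨l₂, hl₂, hb⟩
      have hl₂' : IsLongestPath G l₂ := hrev.of_rotations hl₂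
      have hlast : l₂.getLast? = some a := by
        rw [getLast?_eq_of_rotations hl₂, List.getLast?_reverse, ha]
      have hab : IsBooster G s(a, b) :=
        hl₂'.isBooster hconn hH (hG.three_le_length_of_isLongestPath hk hl₂') hb hlast
      rwa [SimpleGraph.mem_neighborSet, ← SimpleGraph.mem_edgeSet, edgeSet_boosterGraph]
    exact (hrev.lt_ncard_rotationEnds hG).le.trans
      (Nat.cast_le.2 (Set.ncard_le_ncard subset_nbrs (Set.toFinite _)))
  have := ncard_mul_le_two_mul_ncard_edgeSet many_nbrs
  nlinarith [hl.lt_ncard_rotationEnds hG]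

theorem sq_card_div_le_ncard_boosterGraph [Finite V] [DecidableEq V]
    (hG : IsExpander G (Nat.card V / 4) 2) (hV : 8 ≤ Nat.card V)
    (hH : ¬∃ (x : V) (w : G.Walk x x), w.IsHamiltonianCycle) :
    (Nat.card V : ℝ) ^ 2 / 32 ≤ (boosterGraph G).edgeSet.ncard := by
  have : Nonempty V := (Nat.card_pos_iff.1 (by omega)).1
  have hk : (1 : ℝ) ≤ Nat.card V / 4 := by
    rify at hV
    linarith
  have hconn : G.Preconnected := by
    refine hG.preconnected two_pos ?_
    rw [Nat.floor_div_ofNat, Nat.floor_natCast]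
    exact_mod_cast (by omega : Nat.card V < 2 * (1 + 2) * (Nat.card V / 4))
  convert hG.sq_div_two_le_ncard_boosterGraph hk hconn hH using 1
  ring

end Boosters

section RandomGraphs

open MeasureTheory ProbabilityTheory SimpleGraph unitInterval

theorem setBernoulli_real_subset_and_disjoint {ι : Type*} {u : Set ι} (p : I)
    {A B : Finset ι} (hA : (A : Set ι) ⊆ u) (hB : (B : Set ι) ⊆ u) (hAB : Disjoint A B) :
    setBer(u, p).real {s | (A : Set ι) ⊆ s ∧ Disjoint (B : Set ι) s} =
      (p : ℝ) ^ A.card * (1 - p) ^ B.card := by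
  classical
  have box : (fun P : ι → Prop => {i | P i}) ⁻¹' {s | (A : Set ι) ⊆ s ∧ Disjoint (B : Set ι) s} =
      Set.pi ↑(A ∪ B) fun i => {i ∈ A} := by
    ext P
    simp only [Set.mem_preimage, Set.mem_ofPred_eq, Set.mem_pi, Finset.coe_union, Set.mem_union,
      Set.mem_singleton_iff, Set.disjoint_left, eq_iff_iff, or_imp, forall_and, Finset.mem_coe]
    refine and_congr ?_ ?_
    · exact forall₂_congr fun i hi => by simp [Finset.mem_coe.1 hi]
    · exact forall₂_congr fun i hi => by simp [Finset.disjoint_right.1 hAB hi]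
  have factor_A : ∀ i ∈ A, (toNNReal p • Measure.dirac (i ∈ u) +
      toNNReal (σ p) • Measure.dirac False) {i ∈ A} = toNNReal p := fun i hi => by
    simp [hi, hA hi]
  have factor_B : ∀ i ∈ B, (toNNReal p • Measure.dirac (i ∈ u) +
      toNNReal (σ p) • Measure.dirac False) {i ∈ A} = toNNReal (σ p) := fun i hi => by
    simp [Finset.disjoint_right.1 hAB hi, hB hi]
  rw [measureReal_def, setBernoulli_apply', box,
    Measure.infinitePi_pi _ fun _ _ => MeasurableSet.of_discrete, Finset.prod_union hAB,
    Finset.prod_congr rfl factor_A, Finset.prod_congr rfl factor_B]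
  simp

theorem cast_choose_two_le (n : ℕ) : ((n.choose 2 : ℕ) : ℝ) ≤ n ^ 2 / 2 := by
  simpa using Nat.choose_le_pow_div (α := ℝ) 2 n

theorem one_sub_pow_le_exp_neg_mul {x b : ℝ} {m : ℕ} (hx₀ : 0 ≤ x) (hx₁ : x ≤ 1) (hb : b ≤ m) :
    (1 - x) ^ m ≤ Real.exp (-(x * b)) :=
  calc (1 - x) ^ m
    _ ≤ Real.exp (-x) ^ m := pow_le_pow_left₀ (sub_nonneg.2 hx₁) (Real.one_sub_le_exp_neg x) m
    _ = Real.exp (-(x * m)) := by rw [← Real.exp_nat_mul, mul_neg, mul_comm]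
    _ ≤ Real.exp (-(x * b)) := by gcongr

variable {V : Type*} [Finite V]

instance discreteMeasurableSpace_simpleGraph : DiscreteMeasurableSpace (SimpleGraph V) :=
  have : MeasurableSingletonClass (SimpleGraph V) :=
    ⟨fun _ => measurableEmbedding_edgeSet.measurableSet_image.1 .of_discrete⟩
  inferInstance

theorem binomialRandom_real_le_and_disjoint (p : I) {F B : SimpleGraph V} (hFB : Disjoint F B) :
    G(V, p).real {G | F ≤ G ∧ Disjoint B G} =
      (p : ℝ) ^ F.edgeSet.ncard * (1 - p) ^ B.edgeSet.ncard := by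
  classical
  have hF := F.edgeSet.toFinite
  have hB := B.edgeSet.toFinite
  have preimage : fromEdgeSet ⁻¹' {G : SimpleGraph V | F ≤ G ∧ Disjoint B G} =
      {s | (hF.toFinset : Set (Sym2 V)) ⊆ s ∧ Disjoint (hB.toFinset : Set (Sym2 V)) s} := by
    ext s
    simp
  rw [binomialRandom_eq_map, map_measureReal_apply measurable_fromEdgeSet .of_discrete, preimage,
    setBernoulli_real_subset_and_disjoint p (by simp) (by simp) (by simpa),
    ← Set.ncard_eq_toFinset_card _ hF, ← Set.ncard_eq_toFinset_card _ hB]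

theorem sum_pow_ncard_edgeSet [Fintype (SimpleGraph V)] (x : ℝ) :
    ∑ F : SimpleGraph V, x ^ F.edgeSet.ncard = (x + 1) ^ (Nat.card V).choose 2 := by
  classical
  have := Fintype.ofFinite V
  rw [Nat.card_eq_fintype_card, ← card_edgeFinset_top_eq_card_choose_two,
    ← Finset.sum_pow_mul_eq_add_pow]
  refine Finset.sum_nbij' (fun F => F.edgeFinset) (fun A => fromEdgeSet A) ?_ ?_ ?_ ?_ ?_
  · exact fun F _ => Finset.mem_powerset.2 (edgeFinset_mono le_top)
  · exact fun A _ => Finset.mem_univ _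
  · exact fun F _ => by simp
  · intro A hA
    have hA' : Disjoint (A : Set (Sym2 V)) Sym2.diagSet := Set.disjoint_left.2 fun e he =>
      not_isDiag_of_mem_edgeSet ⊤ (mem_edgeFinset.1 (Finset.mem_powerset.1 hA he))
    rw [← Finset.coe_inj, coe_edgeFinset, edgeSet_fromEdgeSet, sdiff_eq_left.2 hA']
  · exact fun F _ => by rw [one_pow, mul_one, ← coe_edgeFinset, Set.ncard_coe_finset]

theorem sum_pow_ncard_edgeSet_le [Fintype (SimpleGraph V)] {x t M : ℝ} (hx : 0 ≤ x) (ht : 0 ≤ t) :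
    ∑ F : SimpleGraph V with F.edgeSet.ncard ≤ M, x ^ F.edgeSet.ncard ≤
      Real.exp (t * M + x * Real.exp (-t) * (Nat.card V ^ 2 / 2)) := by
  have term_le (F : SimpleGraph V) (hF : F.edgeSet.ncard ≤ M) :
      x ^ F.edgeSet.ncard ≤ Real.exp (t * M) * (x * Real.exp (-t)) ^ F.edgeSet.ncard := by
    rw [mul_pow, mul_left_comm, ← Real.exp_nat_mul, ← Real.exp_add]
    refine le_mul_of_one_le_right (by positivity) (Real.one_le_exp ?_)
    nlinarith
  calc ∑ F : SimpleGraph V with F.edgeSet.ncard ≤ M, x ^ F.edgeSet.ncard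
    _ ≤ ∑ F : SimpleGraph V with F.edgeSet.ncard ≤ M,
          Real.exp (t * M) * (x * Real.exp (-t)) ^ F.edgeSet.ncard :=
        Finset.sum_le_sum fun F hF => term_le F (Finset.mem_filter.1 hF).2
    _ ≤ ∑ F : SimpleGraph V, Real.exp (t * M) * (x * Real.exp (-t)) ^ F.edgeSet.ncard :=
        Finset.sum_le_sum_of_subset_of_nonneg (Finset.filter_subset _ _)
          fun _ _ _ => by positivity
    _ = Real.exp (t * M) * (x * Real.exp (-t) + 1) ^ (Nat.card V).choose 2 := by
        rw [← Finset.mul_sum, sum_pow_ncard_edgeSet]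
    _ ≤ Real.exp (t * M) * Real.exp (x * Real.exp (-t)) ^ (Nat.card V).choose 2 := by
        gcongr
        exact Real.add_one_le_exp _
    _ = Real.exp (t * M + x * Real.exp (-t) * (Nat.card V).choose 2) := by
        rw [← Real.exp_nat_mul, ← Real.exp_add, mul_comm (((Nat.card V).choose 2 : ℕ) : ℝ)]
    _ ≤ Real.exp (t * M + x * Real.exp (-t) * (Nat.card V ^ 2 / 2)) := by
        gcongr
        exact cast_choose_two_le _

theorem gnpProb_eq_binomialRandom_real {n : ℕ} (p : I) (P : SimpleGraph (Fin n) → Prop) :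
    gnpProb n p P = G(Fin n, p).real {G | P G} := by
  classical
  have singleton (G : SimpleGraph (Fin n)) : G(Fin n, p).real {G} =
      (p : ℝ) ^ G.edgeSet.ncard * (1 - p) ^ (n.choose 2 - G.edgeSet.ncard) := by
    simp [measureReal_def]
  rw [gnpProb, ← Finset.sum_filter, ← Finset.coe_filter_univ, ← sum_measureReal_singleton]
  exact Finset.sum_congr rfl fun G _ => (singleton G).symm

theorem gnpProb_le_one {n : ℕ} {p : ℝ} (hp₀ : 0 ≤ p) (hp₁ : p ≤ 1)
    (P : SimpleGraph (Fin n) → Prop) : gnpProb n p P ≤ 1 := by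
  lift p to I using ⟨hp₀, hp₁⟩
  exact (gnpProb_eq_binomialRandom_real p P).trans_le measureReal_le_one

theorem binomialRandom_real_exists_sparse_le {t b M : ℝ} (p : I)
    {B : SimpleGraph V → SimpleGraph V} (hB : ∀ F, Disjoint F (B F)) (ht : 0 ≤ t) :
    G(V, p).real {G | ∃ F, F.edgeSet.ncard ≤ M ∧ b ≤ (B F).edgeSet.ncard ∧
        F ≤ G ∧ Disjoint (B F) G} ≤
      Real.exp (t * M + p * Real.exp (-t) * (Nat.card V ^ 2 / 2) - p * b) := by
  classical
  have := Fintype.ofFinite (SimpleGraph V)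
  let sparse : Finset (SimpleGraph V) :=
    {F | F.edgeSet.ncard ≤ M ∧ b ≤ (B F).edgeSet.ncard}
  calc G(V, p).real {G | ∃ F, F.edgeSet.ncard ≤ M ∧ b ≤ (B F).edgeSet.ncard ∧
        F ≤ G ∧ Disjoint (B F) G}
    _ = G(V, p).real (⋃ F ∈ sparse, {G | F ≤ G ∧ Disjoint (B F) G}) := by
        congr 1
        ext G
        simp only [Set.mem_iUnion, Set.mem_ofPred_eq, sparse, Finset.mem_filter, Finset.mem_univ,
          true_and, exists_prop, and_assoc]
    _ ≤ ∑ F ∈ sparse, G(V, p).real {G | F ≤ G ∧ Disjoint (B F) G} :=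
        measureReal_biUnion_finset_le _ _
    _ ≤ ∑ F ∈ sparse, (p : ℝ) ^ F.edgeSet.ncard * Real.exp (-(p * b)) := by
        refine Finset.sum_le_sum fun F hF => ?_
        rw [binomialRandom_real_le_and_disjoint p (hB F)]
        exact mul_le_mul_of_nonneg_left
          (one_sub_pow_le_exp_neg_mul p.2.1 p.2.2 (Finset.mem_filter.1 hF).2.2)
          (pow_nonneg p.2.1 _)
    _ ≤ ∑ F : SimpleGraph V with F.edgeSet.ncard ≤ M,
          (p : ℝ) ^ F.edgeSet.ncard * Real.exp (-(p * b)) := by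
        refine Finset.sum_le_sum_of_subset_of_nonneg ?_ fun F _ _ =>
          mul_nonneg (pow_nonneg p.2.1 _) (Real.exp_nonneg _)
        exact Finset.monotone_filter_right _ fun F _ hF => hF.1
    _ ≤ Real.exp (t * M + p * Real.exp (-t) * (Nat.card V ^ 2 / 2)) * Real.exp (-(p * b)) := by
        rw [← Finset.sum_mul]
        exact mul_le_mul_of_nonneg_right (sum_pow_ncard_edgeSet_le p.2.1 ht) (Real.exp_nonneg _)
    _ = Real.exp (t * M + p * Real.exp (-t) * (Nat.card V ^ 2 / 2) - p * b) := by
        rw [← Real.exp_add, sub_eq_add_neg]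

end RandomGraphs

section HitsBoosters

open MeasureTheory ProbabilityTheory SimpleGraph unitInterval

variable {V : Type*} [DecidableEq V]

/-- `G` contains a booster of each of its non-Hamiltonian subgraphs with at least `s` vertices and
at most `M` edges that are `(k, 2)`-expanders for `k` a quarter of the number of vertices. -/
def HitsBoosters (G : SimpleGraph V) (s M : ℝ) : Prop :=
  ∀ W : Finset V, s ≤ W.card → ∀ H : G.Subgraph, H.verts = ↑W →
    IsExpander H.coe (W.card / 4) 2 → H.coe.edgeSet.ncard ≤ M →
    (¬∃ (a : H.verts) (w : H.coe.Walk a a), w.IsHamiltonianCycle) →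
    ∃ e : Sym2 H.verts, IsBooster H.coe e ∧ e.map Subtype.val ∈ G.edgeSet

/-- The boosters of the subgraph of `F` induced on `W`, as a graph on all of `V`. -/
def boosterGraphOn (W : Set V) (F : SimpleGraph V) : SimpleGraph V :=
  (boosterGraph (F.induce W)).spanningCoe

theorem edgeSet_boosterGraphOn (W : Set V) (F : SimpleGraph V) :
    (boosterGraphOn W F).edgeSet = Sym2.map Subtype.val '' {e | IsBooster (F.induce W) e} := by
  rw [boosterGraphOn, edgeSet_map, edgeSet_boosterGraph]
  rfl

theorem disjoint_boosterGraphOn (W : Set V) (F : SimpleGraph V) :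
    Disjoint F (boosterGraphOn W F) := by
  rw [← disjoint_edgeSet, edgeSet_boosterGraphOn, Set.disjoint_right]
  rintro _ ⟨e, he, rfl⟩ heF
  refine he.2.1 ?_
  induction e with
  | h x y => exact heF

theorem exists_sparse_of_not_hitsBoosters [Finite V] {G : SimpleGraph V} {s M : ℝ} (hs : 8 ≤ s)
    (hG : ¬HitsBoosters G s M) :
    ∃ (W : Set V) (F : SimpleGraph V), F.edgeSet.ncard ≤ M ∧
      s ^ 2 / 32 ≤ (boosterGraphOn W F).edgeSet.ncard ∧ F ≤ G ∧
      Disjoint (boosterGraphOn W F) G := by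
  simp only [HitsBoosters, not_forall] at hG
  obtain ⟨W, hW, H, hHW, hexp, hM, hham, hmiss⟩ := hG
  have induce_eq : H.spanningCoe.induce H.verts = H.coe := by
    ext x y
    simp
  have card_verts : Nat.card H.verts = W.card := by
    rw [Nat.card_coe_set_eq, hHW, Set.ncard_coe_finset]
  have edges : (boosterGraphOn H.verts H.spanningCoe).edgeSet =
      Sym2.map Subtype.val '' {e | IsBooster H.coe e} := by
    rw [edgeSet_boosterGraphOn, induce_eq]
  refine ⟨H.verts, H.spanningCoe, ?_, ?_, H.spanningCoe_le, ?_⟩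
  · rwa [Subgraph.edgeSet_spanningCoe, ← Subgraph.image_coe_edgeSet_coe,
      Set.ncard_image_of_injective _ (Sym2.map.injective Subtype.val_injective)]
  · have many := sq_card_div_le_ncard_boosterGraph (G := H.coe) (by rwa [card_verts])
      (by rw [card_verts]; exact_mod_cast hs.trans hW) hham
    rw [edgeSet_boosterGraph, card_verts] at many
    rw [edges, Set.ncard_image_of_injective _ (Sym2.map.injective Subtype.val_injective)]
    exact le_trans (by gcongr) many
  · rw [← disjoint_edgeSet, edges, Set.disjoint_left]
    rintro _ ⟨e, he, rfl⟩ heG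
    exact hmiss ⟨e, he, heG⟩

theorem binomialRandom_real_not_hitsBoosters_le [Finite V] {s t M : ℝ} (p : I) (hs : 8 ≤ s)
    (ht : 0 ≤ t) :
    G(V, p).real {G | ¬HitsBoosters G s M} ≤ 2 ^ Nat.card V *
      Real.exp (t * M + p * Real.exp (-t) * (Nat.card V ^ 2 / 2) - p * (s ^ 2 / 32)) := by
  have := Fintype.ofFinite V
  calc G(V, p).real {G | ¬HitsBoosters G s M}
    _ ≤ G(V, p).real (⋃ W : Set V, {G | ∃ F, F.edgeSet.ncard ≤ M ∧
          s ^ 2 / 32 ≤ (boosterGraphOn W F).edgeSet.ncard ∧ F ≤ G ∧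
          Disjoint (boosterGraphOn W F) G}) :=
        measureReal_mono fun G hG => Set.mem_iUnion.2 (exists_sparse_of_not_hitsBoosters hs hG)
    _ ≤ ∑ W : Set V, G(V, p).real {G | ∃ F, F.edgeSet.ncard ≤ M ∧
          s ^ 2 / 32 ≤ (boosterGraphOn W F).edgeSet.ncard ∧ F ≤ G ∧
          Disjoint (boosterGraphOn W F) G} := measureReal_iUnion_fintype_le _
    _ ≤ ∑ _W : Set V, Real.exp
          (t * M + p * Real.exp (-t) * (Nat.card V ^ 2 / 2) - p * (s ^ 2 / 32)) :=
        Finset.sum_le_sum fun W _ =>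
          binomialRandom_real_exists_sparse_le p (disjoint_boosterGraphOn W) ht
    _ = _ := by
        rw [Finset.sum_const, Finset.card_univ, Fintype.card_set, nsmul_eq_mul,
          Nat.card_eq_fintype_card, Nat.cast_pow, Nat.cast_ofNat]

theorem one_sub_le_gnpProb_hitsBoosters {n : ℕ} {p s t M : ℝ} (hp₀ : 0 ≤ p) (hp₁ : p ≤ 1)
    (hs : 8 ≤ s) (ht : 0 ≤ t) :
    1 - 2 ^ n * Real.exp (t * M + p * Real.exp (-t) * (n ^ 2 / 2) - p * (s ^ 2 / 32)) ≤
      gnpProb n p fun G => HitsBoosters G s M := by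
  lift p to I using ⟨hp₀, hp₁⟩
  have compl := probReal_compl_eq_one_sub (μ := G(Fin n, p))
    (s := {G | ¬HitsBoosters G s M}) .of_discrete
  have fail := binomialRandom_real_not_hitsBoosters_le (V := Fin n) (M := M) p hs ht
  rw [Nat.card_fin] at fail
  rw [gnpProb_eq_binomialRandom_real]
  simp only [Set.compl_ofPred, not_not] at compl
  linarith

end HitsBoosters

section Asymptotics

open Filter Topology Real

theorem exp_neg_inv_le {β : ℝ} (hβ : 0 < β) : exp (-β⁻¹) ≤ β := by
  rw [exp_neg]
  exact inv_le_of_inv_le₀ hβ ((le_add_of_nonneg_right zero_le_one).trans (add_one_le_exp _))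

/- The cutoff `t = β⁻¹` makes the entropy of the sparse graphs cost at most half of the gain
`p β n²` from missing all boosters; `M = β² ε / 4 * n * log n` makes `t M` at most half of the
rest. -/
theorem two_pow_mul_exp_le {n : ℕ} {p β ε : ℝ} (hp : 0 ≤ p) (hβ : 0 < β)
    (hpn : ε * log n ≤ n * p) :
    2 ^ n * exp (β⁻¹ * (β ^ 2 * ε / 4 * n * log n) + p * exp (-β⁻¹) * (n ^ 2 / 2) -
        p * (β * n ^ 2)) ≤
      exp (n * (log 2 - β * ε / 4 * log n)) := by
  have pow_eq : (2 : ℝ) ^ n = exp (n * log 2) := by rw [exp_nat_mul, exp_log two_pos]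
  have cutoff_eq : β⁻¹ * (β ^ 2 * ε / 4 * n * log n) = β * n / 4 * (ε * log n) := by
    field_simp
  have entropy_le : p * exp (-β⁻¹) * (n ^ 2 / 2) ≤ p * β * (n ^ 2 / 2) := by
    gcongr
    exact exp_neg_inv_le hβ
  have gain_ge : β * n / 2 * (ε * log n) ≤ β * n / 2 * (n * p) := by gcongr
  rw [pow_eq, ← exp_add, exp_le_exp, cutoff_eq]
  linarith

theorem tendsto_exp_natCast_mul_sub_log {γ : ℝ} (a : ℝ) (hγ : 0 < γ) :
    Tendsto (fun n : ℕ => exp (n * (a - γ * log n))) atTop (𝓝 0) := by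
  have log_atTop : Tendsto (fun n : ℕ => γ * log n) atTop atTop :=
    (tendsto_log_atTop.comp tendsto_natCast_atTop_atTop).const_mul_atTop hγ
  have factor_atBot : Tendsto (fun n : ℕ => a - γ * log n) atTop atBot :=
    tendsto_const_nhds.add_atBot (tendsto_neg_atTop_atBot.comp log_atTop)
  exact tendsto_exp_atBot.comp (tendsto_natCast_atTop_atTop.atTop_mul_atBot₀ factor_atBot)

theorem gnp_hits_boosters_general {δ ε : ℝ} (hδ : 0 < δ) (hε : 0 < ε) :
    ∃ c : ℝ, 0 < c ∧ ∀ p : ℕ → ℝ, (∀ n, 0 ≤ p n ∧ p n ≤ 1) →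
      (∀ᶠ n : ℕ in atTop, ε * log n ≤ n * p n) →
      Tendsto (fun n : ℕ => gnpProb n (p n) fun G => HitsBoosters G (δ * n) (c * n * log n))
        atTop (𝓝 1) := by
  set β : ℝ := δ ^ 2 / 32 with hβ_def
  have hβ : 0 < β := by positivity
  refine ⟨β ^ 2 * ε / 4, by positivity, fun p hp hpn => ?_⟩
  have lower_tendsto :
      Tendsto (fun n : ℕ => 1 - exp (n * (log 2 - β * ε / 4 * log n))) atTop (𝓝 1) := by
    simpa using (tendsto_exp_natCast_mul_sub_log (log 2) (by positivity)).const_sub 1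
  have large : ∀ᶠ n : ℕ in atTop, 8 ≤ δ * n :=
    (tendsto_natCast_atTop_atTop.const_mul_atTop hδ).eventually_ge_atTop 8
  refine tendsto_of_tendsto_of_tendsto_of_le_of_le' lower_tendsto tendsto_const_nhds ?_
    (.of_forall fun n => gnpProb_le_one (hp n).1 (hp n).2 _)
  filter_upwards [large, hpn] with n hn hpn
  have sq_eq : (δ * n) ^ 2 / 32 = β * n ^ 2 := by rw [hβ_def]; ring
  have bound := one_sub_le_gnpProb_hitsBoosters (n := n) (M := β ^ 2 * ε / 4 * n * log n)
    (hp n).1 (hp n).2 hn (inv_nonneg.2 hβ.le)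
  rw [sq_eq] at bound
  exact (sub_le_sub_left (two_pow_mul_exp_le (hp n).1 hβ hpn) 1).trans bound

theorem eventually_log_le_of_tendsto_sub_log_log {f : ℕ → ℝ}
    (hf : Tendsto (fun n : ℕ => f n - log n - log (log n)) atTop atTop) :
    ∀ᶠ n : ℕ in atTop, log n ≤ f n := by
  have log_log_atTop : Tendsto (fun n : ℕ => log (log n)) atTop atTop :=
    tendsto_log_atTop.comp (tendsto_log_atTop.comp tendsto_natCast_atTop_atTop)
  filter_upwards [hf.eventually_ge_atTop 0, log_log_atTop.eventually_ge_atTop 0] with n hn hlog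
  linarith

end Asymptotics

/-- **Lemma (random graphs hit boosters of sparse expanders).**
There is an absolute constant `c > 0` such that: if `p(n)` satisfies
`n·p(n) − log n − log log n → ∞` and `n·p(n) − log n − log log n = o(log log n)`,
then whp `G ~ G(n, p(n))` is such that for every `W ⊆ V(G)` with `|W| ≥ 0.1n` and
every non-Hamiltonian subgraph `H` of `G` on vertex set `W` which is a
`(|W|/4, 2)`-expander with at most `c·n·log n` edges, some booster of `H` is an
edge of `G`. -/
theorem gnp_hits_boosters :
    ∃ c : ℝ, 0 < c ∧
      ∀ p : ℕ → ℝ, (∀ n, 0 ≤ p n ∧ p n ≤ 1) →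
      Filter.Tendsto
        (fun n : ℕ => n * p n - Real.log n - Real.log (Real.log n))
        Filter.atTop Filter.atTop →
      (fun n : ℕ => n * p n - Real.log n - Real.log (Real.log n))
        =o[Filter.atTop] (fun n : ℕ => Real.log (Real.log n)) →
      Filter.Tendsto
        (fun n : ℕ => gnpProb n (p n) (fun G =>
          ∀ W : Finset (Fin n), (0.1 : ℝ) * n ≤ (W.card : ℝ) →
          ∀ H : G.Subgraph, H.verts = ↑W →
            IsExpander H.coe ((W.card : ℝ) / 4) 2 →
            (H.coe.edgeSet.ncard : ℝ) ≤ c * n * Real.log n →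
            (¬∃ (a : H.verts) (w : H.coe.Walk a a), w.IsHamiltonianCycle) →
            ∃ e : Sym2 H.verts, IsBooster H.coe e ∧ e.map Subtype.val ∈ G.edgeSet))
        Filter.atTop (nhds 1) := by
  obtain ⟨c, hc, hits⟩ := gnp_hits_boosters_general (δ := 0.1) (ε := 1) (by norm_num) one_pos
  refine ⟨c, hc, fun p hp hlog _ => hits p hp ?_⟩
  simpa only [one_mul] using eventually_log_le_of_tendsto_sub_log_log hlog
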